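/- Let q be an odd prime power. Let A_11 be the 0-1 matrix over F_2 whose rows are indexed by the anisotropic points P of PG(2,q) (with respect to Q(x) = x_1^2 − x_0 x_2) and whose columns are indexed by the anisotropic points R, with entry 1 exactly when R lies on the polar line P^⊥ of P. Then A_11^4 = J − I over F_2, where J is the all-ones matrix and I is the identity. -/

import Mathlib

/-- The quadratic form `Q(x₀,x₁,x₂) = x₁² - x₀x₂` on `F³`. -/
def Qc (F : Type) [Field F] (v : Fin 3 → F) : F := v 1 ^ 2 - v 0 * v 2

/-- The bilinear form associated to `Qc`. -/
def Bc (F : Type) [Field F] (x y : Fin 3 → F) : F :=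
  (2 : F)⁻¹ * (Qc F (x + y) - Qc F x - Qc F y)

/-- A point of `PG(2,q)` is absolute if `Q` vanishes on it. -/
def Absolute (F : Type) [Field F] (P : Projectivization F (Fin 3 → F)) : Prop :=
  Qc F P.rep = 0

/-- A point of `PG(2,q)` is external if `Q` takes a nonzero square value on it. -/
def External (F : Type) [Field F] (P : Projectivization F (Fin 3 → F)) : Prop :=
  IsSquare (Qc F P.rep) ∧ Qc F P.rep ≠ 0

/-- A point of `PG(2,q)` is internal if `Q` takes a non-square value on it. -/
def Internal (F : Type) [Field F] (P : Projectivization F (Fin 3 → F)) : Prop :=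
  ¬ IsSquare (Qc F P.rep)

/-- Lines of `PG(2,q)` are the 2-dimensional subspaces of `F³`. -/
def IsLine (F : Type) [Field F] (L : Submodule F (Fin 3 → F)) : Prop :=
  Module.finrank F ↥L = 2

/-- The number of absolute points on a line. -/
noncomputable def nAbs (F : Type) [Field F] (L : Submodule F (Fin 3 → F)) : ℕ :=
  Nat.card {P : Projectivization F (Fin 3 → F) // Absolute F P ∧ P.submodule ≤ L}

open Classical in
/-- Indicator of a proposition in `F₂`. -/
noncomputable def ind (p : Prop) : ZMod 2 := if p then 1 else 0

/-- The incidence matrix between anisotropic points and the polar lines of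
anisotropic points: the `(P,R)` entry is `1` iff `⟨P,R⟩ = 0`. -/
noncomputable def A11 (F : Type) [Field F] :
    Matrix {P : Projectivization F (Fin 3 → F) // Qc F P.rep ≠ 0}
      {P : Projectivization F (Fin 3 → F) // Qc F P.rep ≠ 0} (ZMod 2) :=
  Matrix.of fun P R => ind (Bc F P.1.rep R.1.rep = 0)

open scoped LinearAlgebra.Projectivization

section helpers

variable {F : Type} [Field F]

lemma Bc_zero_iff (h2 : (2 : F) ≠ 0) (x y : Fin 3 → F) :
    Bc F x y = 0 ↔ 2 * x 1 * y 1 - x 0 * y 2 - x 2 * y 0 = 0 := by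
  have : Qc F (x + y) - Qc F x - Qc F y = 2 * x 1 * y 1 - x 0 * y 2 - x 2 * y 0 := by
    simp only [Qc, Pi.add_apply]; ring
  rw [Bc, this]
  simp [h2]

lemma Bc_symm (x y : Fin 3 → F) : Bc F x y = Bc F y x := by
  simp only [Bc, Qc, Pi.add_apply]; ring

lemma Qc_mk_rep (v : Fin 3 → F) (hv : v ≠ 0) :
    Qc F (Projectivization.mk F v hv).rep = 0 ↔ Qc F v = 0 := by
  obtain ⟨a, ha⟩ := Projectivization.exists_smul_eq_mk_rep F v hv
  rw [← ha]
  have : Qc F (a • v) = (a : F) ^ 2 * Qc F v := by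
    simp only [Qc, Pi.smul_apply, Units.smul_def, smul_eq_mul]; ring
  rw [this]; simp

lemma Bc_mk_rep (x v : Fin 3 → F) (hv : v ≠ 0) :
    Bc F x (Projectivization.mk F v hv).rep = 0 ↔ Bc F x v = 0 := by
  obtain ⟨a, ha⟩ := Projectivization.exists_smul_eq_mk_rep F v hv
  rw [← ha]
  have : Bc F x (a • v) = (a : F) * Bc F x v := by
    simp only [Bc, Qc, Pi.add_apply, Pi.smul_apply, Units.smul_def, smul_eq_mul]; ring
  rw [this]; simp

/-- coordinates of the polar line -/
def polv (x : Fin 3 → F) : Fin 3 → F := ![-x 2, 2 * x 1, -x 0]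

lemma polv_ne (h2 : (2 : F) ≠ 0) {x : Fin 3 → F} (hx : x ≠ 0) : polv x ≠ 0 := by
  intro h
  apply hx
  have h0 := congrFun h 0
  have h1 := congrFun h 1
  have h3 := congrFun h 2
  simp [polv, h2] at h0 h1 h3
  ext i; fin_cases i <;> simp [*]

/-- the polar line -/
noncomputable def pol (h2 : (2 : F) ≠ 0) (P : ℙ F (Fin 3 → F)) : ℙ F (Fin 3 → F) :=
  Projectivization.mk F (polv P.rep) (polv_ne h2 P.rep_nonzero)

lemma pol_inj (h2 : (2 : F) ≠ 0) : Function.Injective (pol (F := F) h2) := by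
  intro P R h
  rw [pol, pol, Projectivization.mk_eq_mk_iff'] at h
  obtain ⟨a, ha⟩ := h
  rw [← P.mk_rep, ← R.mk_rep, Projectivization.mk_eq_mk_iff']
  refine ⟨a, ?_⟩
  have h0 := congrFun ha 0
  have h1 := congrFun ha 1
  have h3 := congrFun ha 2
  simp [polv] at h0 h1 h3
  have h1' : a * R.rep 1 = P.rep 1 := mul_left_cancel₀ h2 (by rw [← h1]; ring)
  ext i; fin_cases i <;> simp [*]

lemma Bc_iff_mem (h2 : (2 : F) ≠ 0) (P R : ℙ F (Fin 3 → F)) :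
    Bc F P.rep R.rep = 0 ↔ Projectivization.orthogonal R (pol h2 P) := by
  conv_rhs => rw [← R.mk_rep, pol]
  rw [Projectivization.orthogonal_mk, Bc_zero_iff h2]
  simp only [dotProduct, Fin.sum_univ_three, polv]
  simp
  constructor <;> intro h <;> linear_combination h

lemma exists_unique_perp (h2 : (2 : F) ≠ 0) (P R : ℙ F (Fin 3 → F)) (h : P ≠ R) :
    ∃ S : ℙ F (Fin 3 → F), ∀ T : ℙ F (Fin 3 → F),
      (Bc F P.rep T.rep = 0 ∧ Bc F R.rep T.rep = 0) ↔ T = S := by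
  classical
  have hne : pol h2 P ≠ pol h2 R := fun e => h (pol_inj h2 e)
  refine ⟨Projectivization.cross (pol h2 P) (pol h2 R), fun T => ?_⟩
  rw [Bc_iff_mem h2, Bc_iff_mem h2]
  constructor
  · rintro ⟨h1, h3⟩
    rcases Configuration.ofField.eq_or_eq_of_orthogonal h1
      (Projectivization.cross_orthogonal_left hne) h3
      (Projectivization.cross_orthogonal_right hne) with e | e
    · exact e
    · exact absurd e hne
  · rintro rfl
    exact ⟨Projectivization.cross_orthogonal_left hne, Projectivization.cross_orthogonal_right hne⟩

lemma card_pts [Fintype F] [Fintype (ℙ F (Fin 3 → F))] :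
    Fintype.card (ℙ F (Fin 3 → F)) = Fintype.card F ^ 2 + Fintype.card F + 1 := by
  have := Projectivization.card_of_finrank F (Fin 3 → F) (n := 3) (by simp)
  rw [Nat.card_eq_fintype_card, Nat.card_eq_fintype_card] at this
  rw [this]; simp [Finset.sum_range_succ]; ring

lemma line_card [Fintype F] [Fintype (ℙ F (Fin 3 → F))] (h2 : (2 : F) ≠ 0)
    (P : ℙ F (Fin 3 → F)) :
    Nat.card {T : ℙ F (Fin 3 → F) // Bc F P.rep T.rep = 0} = Fintype.card F + 1 := by
  classical
  have h1 := Configuration.ProjectivePlane.pointCount_eq (ℙ F (Fin 3 → F))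
    (L := ℙ F (Fin 3 → F)) (pol h2 P)
  have h3 := Configuration.ProjectivePlane.card_points (ℙ F (Fin 3 → F)) (ℙ F (Fin 3 → F))
  rw [card_pts] at h3
  have h4 : Fintype.card F = Configuration.ProjectivePlane.order (ℙ F (Fin 3 → F))
      (ℙ F (Fin 3 → F)) := by nlinarith
  rw [h4, ← h1]
  unfold Configuration.pointCount
  exact Nat.card_congr (Equiv.subtypeEquivRight fun T => Bc_iff_mem h2 P T)

lemma sum_ind {α : Type*} [Fintype α] (p : α → Prop) :
    ∑ x, ind (p x) = (Nat.card {x // p x} : ZMod 2) := by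
  classical
  simp only [ind]
  rw [Finset.sum_boole, Nat.card_eq_fintype_card, Fintype.card_subtype]

lemma ind_mul (p r : Prop) : ind p * ind r = ind (p ∧ r) := by
  by_cases hp : p <;> by_cases hr : r <;> simp [ind, hp, hr]

lemma sum_line [Fintype F] [Fintype (ℙ F (Fin 3 → F))] (h2 : (2 : F) ≠ 0)
    (hodd : Odd (Fintype.card F)) (P : ℙ F (Fin 3 → F)) :
    ∑ T : ℙ F (Fin 3 → F), ind (Bc F P.rep T.rep = 0) = 0 := by
  rw [sum_ind, line_card h2, ZMod.natCast_eq_zero_iff_even]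
  exact hodd.add_one

lemma sum_two [Fintype F] [Fintype (ℙ F (Fin 3 → F))] (h2 : (2 : F) ≠ 0)
    (hodd : Odd (Fintype.card F)) (P R : ℙ F (Fin 3 → F)) :
    ∑ T : ℙ F (Fin 3 → F), ind (Bc F P.rep T.rep = 0) * ind (Bc F R.rep T.rep = 0)
      = 1 + ind (P = R) := by
  classical
  by_cases h : P = R
  · subst h
    simp only [ind_mul, and_self]
    rw [sum_line h2 hodd]
    simp [ind]; decide
  · obtain ⟨S, hS⟩ := exists_unique_perp h2 P R h
    simp only [ind_mul, hS]
    simp [ind, h]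

/-- parametrization of the conic -/
def par : Option F → (Fin 3 → F)
  | none => ![0, 0, 1]
  | some t => ![1, t, t ^ 2]

lemma par_ne (o : Option F) : par o ≠ 0 := by
  intro h
  cases o with
  | none => simpa [par] using congrFun h 2
  | some t => simpa [par] using congrFun h 0

lemma Qc_par (o : Option F) : Qc F (par o) = 0 := by
  cases o <;> simp [par, Qc]

/-- parametrization of absolute points -/
def parP (o : Option F) : {P : ℙ F (Fin 3 → F) // ¬ Qc F P.rep ≠ 0} :=
  ⟨Projectivization.mk F (par o) (par_ne o), by
    rw [not_not, Qc_mk_rep]; exact Qc_par o⟩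

lemma parP_bij : Function.Bijective (parP (F := F)) := by
  constructor
  · intro o o' h
    have h := congrArg Subtype.val h
    simp only [parP] at h
    rw [Projectivization.mk_eq_mk_iff'] at h
    obtain ⟨a, ha⟩ := h
    have h0 := congrFun ha 0
    have h1 := congrFun ha 1
    have h3 := congrFun ha 2
    cases o <;> cases o' <;> simp [par] at h0 h1 h3 ⊢
    · subst h0; simp at h3
    · subst h0; simpa using h1.symm
  · rintro ⟨P, hP⟩
    rw [not_not] at hP
    simp only [Qc] at hP
    by_cases h0 : P.rep 0 = 0
    · refine ⟨none, Subtype.ext ?_⟩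
      simp only [parP]
      conv_rhs => rw [← P.mk_rep]
      symm
      rw [Projectivization.mk_eq_mk_iff']
      refine ⟨P.rep 2, ?_⟩
      have h1 : P.rep 1 = 0 := by simpa [h0] using hP
      ext i; fin_cases i <;> simp [par, h0, h1]
    · refine ⟨some (P.rep 1 / P.rep 0), Subtype.ext ?_⟩
      simp only [parP]
      conv_rhs => rw [← P.mk_rep]
      symm
      rw [Projectivization.mk_eq_mk_iff']
      refine ⟨P.rep 0, ?_⟩
      ext i; fin_cases i <;> simp [par]
      · field_simp
      · field_simp; linear_combination hP

lemma sum_abs [Fintype F] [Fintype {P : ℙ F (Fin 3 → F) // ¬ Qc F P.rep ≠ 0}]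
    (h2 : (2 : F) ≠ 0) (x : Fin 3 → F) (hx : Qc F x ≠ 0) :
    ∑ T : {P : ℙ F (Fin 3 → F) // ¬ Qc F P.rep ≠ 0}, ind (Bc F x T.1.rep = 0) = 0 := by
  classical
  rw [← (Equiv.ofBijective _ (parP_bij (F := F))).sum_comp]
  have key : ∀ o : Option F, Bc F x (parP o).1.rep = 0 ↔
      2 * x 1 * par o 1 - x 0 * par o 2 - x 2 * par o 0 = 0 := fun o => by
    rw [← Bc_zero_iff h2]; exact Bc_mk_rep x (par o) (par_ne o)
  have n0 : par (none : Option F) 0 = 0 := rfl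
  have n1 : par (none : Option F) 1 = 0 := rfl
  have n2 : par (none : Option F) 2 = 1 := rfl
  have s0 : ∀ t : F, par (some t) 0 = 1 := fun _ => rfl
  have s1 : ∀ t : F, par (some t) 1 = t := fun _ => rfl
  have s2 : ∀ t : F, par (some t) 2 = t ^ 2 := fun _ => rfl
  simp only [Equiv.ofBijective_apply, key, Fintype.sum_option, n0, n1, n2, s0, s1, s2]
  simp only [Qc] at hx
  by_cases h0 : x 0 = 0
  · have h1 : x 1 ≠ 0 := by rintro h1; simp [h0, h1] at hx
    have : ∀ t : F, (2 * x 1 * t - x 0 * t ^ 2 - x 2 * 1 = 0) ↔ t = x 2 / (2 * x 1) := by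
      intro t
      rw [h0, eq_div_iff (mul_ne_zero h2 h1)]
      constructor <;> intro h <;> linear_combination h
    simp only [this]
    simp [ind, h0]; decide
  · have hn : ∑ t : F, ind (2 * x 1 * t - x 0 * t ^ 2 - x 2 * 1 = 0) = 0 := by
      have hinv : ∀ t : F, (2 * x 1 * (2 * x 1 / x 0 - t) - x 0 * (2 * x 1 / x 0 - t) ^ 2
          - x 2 * 1) = 2 * x 1 * t - x 0 * t ^ 2 - x 2 * 1 := by
        intro t; field_simp; ring
      refine Finset.sum_involution (fun t _ => 2 * x 1 / x 0 - t) ?_ ?_ ?_ ?_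
      · intro t _
        rw [hinv]; exact CharTwo.add_self_eq_zero _
      · intro t _ ht e
        apply ht
        have : ¬ (2 * x 1 * t - x 0 * t ^ 2 - x 2 * 1 = 0) := by
          intro hh
          apply hx
          have e2 : x 0 * t = x 1 := by
            field_simp at e
            exact mul_left_cancel₀ h2 (by linear_combination -e)
          rw [← e2] at hh ⊢
          linear_combination x 0 * hh
        rw [ind, if_neg this]
      · intros; simp
      · intros; simp
    rw [hn]
    simp [ind, h0]

lemma abs_perp (h2 : (2 : F) ≠ 0) (X Y : {P : ℙ F (Fin 3 → F) // ¬ Qc F P.rep ≠ 0}) :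
    Bc F X.1.rep Y.1.rep = 0 ↔ X = Y := by
  obtain ⟨o, rfl⟩ := parP_bij.2 X
  obtain ⟨o', rfl⟩ := parP_bij.2 Y
  rw [parP_bij.1.eq_iff]
  simp only [parP]
  rw [Bc_mk_rep, Bc_symm, Bc_mk_rep, Bc_zero_iff h2]
  cases o <;> cases o' <;> simp [par]
  rename_i t s
  rw [show 2 * s * t - t ^ 2 - s ^ 2 = -(t - s) ^ 2 by ring, neg_eq_zero, sq_eq_zero_iff, sub_eq_zero]

end helpers

/-- Over `F₂`, the fourth power of the anisotropic incidence matrix of `PG(2,q)`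
is `J - I`, with `J` the all-ones matrix. -/
theorem stmt9 (F : Type) [Field F] [Fintype F] (q : ℕ)
    (hq : Fintype.card F = q) (hodd : Odd q)
    [Fintype {P : Projectivization F (Fin 3 → F) // Qc F P.rep ≠ 0}]
    [DecidableEq {P : Projectivization F (Fin 3 → F) // Qc F P.rep ≠ 0}] :
    A11 F ^ 4 = (Matrix.of fun _ _ => (1 : ZMod 2)) - 1 := by
  classical
  subst hq
  have h2 : (2 : F) ≠ 0 := by
    apply Ring.two_ne_zero
    intro h
    have := FiniteField.even_card_of_char_two h
    rw [Nat.odd_iff] at hodd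
    omega
  have : Fintype (ℙ F (Fin 3 → F)) := Fintype.ofFinite _
  let An := {P : Projectivization F (Fin 3 → F) // Qc F P.rep ≠ 0}
  let Ab := {P : Projectivization F (Fin 3 → F) // ¬ Qc F P.rep ≠ 0}
  let C : Matrix An Ab (ZMod 2) := Matrix.of fun P X => ind (Bc F P.1.rep X.1.rep = 0)
  let J : Matrix An An (ZMod 2) := Matrix.of fun _ _ => 1
  let J10 : Matrix An Ab (ZMod 2) := Matrix.of fun _ _ => 1
  let J01 : Matrix Ab An (ZMod 2) := Matrix.of fun _ _ => 1
  let J00 : Matrix Ab Ab (ZMod 2) := Matrix.of fun _ _ => 1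
  have split : ∀ f : ℙ F (Fin 3 → F) → ZMod 2,
      ∑ x : An, f x.1 + ∑ x : Ab, f x.1 = ∑ x, f x := fun f => by
    convert Fintype.sum_subtype_add_sum_subtype (fun P : ℙ F (Fin 3 → F) => Qc F P.rep ≠ 0) f
  have indeq : ∀ {p r : Prop}, (p ↔ r) → ind p = ind r := fun h => by rw [propext h]
  have two : ∀ a : ZMod 2, a + a = 0 := CharTwo.add_self_eq_zero
  have eA : A11 F * A11 F + C * C.transpose = J + 1 := by
    ext P R
    have h := sum_two h2 hodd P.1 R.1
    rw [← split] at h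
    simp only [Matrix.add_apply, Matrix.mul_apply, Matrix.transpose_apply, A11, C, J,
      Matrix.of_apply, Matrix.one_apply]
    have e : ∀ S : An, Bc F S.1.rep R.1.rep = Bc F R.1.rep S.1.rep := fun S => Bc_symm _ _
    simp only [e]
    rw [h]
    simp [ind, Subtype.ext_iff]
  have hAbs : ∀ X Y : Ab, ind (Bc F X.1.rep Y.1.rep = 0) = ind (X = Y) :=
    fun X Y => indeq (abs_perp h2 X Y)
  have eC : C.transpose * C = J00 := by
    ext X Y
    have h := sum_two h2 hodd X.1 Y.1
    rw [← split] at h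
    simp only [hAbs] at h
    simp only [Matrix.mul_apply, Matrix.transpose_apply, C, J00, Matrix.of_apply]
    have e : ∀ (S : An) (X : Ab), Bc F S.1.rep X.1.rep = Bc F X.1.rep S.1.rep :=
      fun S X => Bc_symm _ _
    simp only [e]
    have h3 : ∑ x : Ab, ind (X = x) * ind (Y = x) = ind (X.1 = Y.1) := by
      rw [Finset.sum_eq_single X (fun x _ hx => by simp [ind, hx.symm]) (by simp)]
      rw [ind_mul]
      apply indeq
      rw [Subtype.ext_iff, Subtype.ext_iff]
      exact ⟨fun h => h.2.symm, fun h => ⟨rfl, h.symm⟩⟩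
    rw [h3] at h
    exact add_right_cancel h
  have eCJ : C * J01 = 0 := by
    ext P R
    simp only [Matrix.mul_apply, C, J01, Matrix.of_apply, mul_one, Matrix.zero_apply]
    exact sum_abs h2 _ P.2
  have eCJ0 : C * J00 = 0 := by
    ext P R
    simp only [Matrix.mul_apply, C, J00, Matrix.of_apply, mul_one, Matrix.zero_apply]
    exact sum_abs h2 _ P.2
  have eJC : J * C = J10 := by
    ext P X
    have h := sum_line h2 hodd X.1
    rw [← split] at h
    simp only [hAbs] at h
    simp only [Matrix.mul_apply, C, J, J10, Matrix.of_apply, one_mul]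
    have e : ∀ (S : An), Bc F S.1.rep X.1.rep = Bc F X.1.rep S.1.rep :=
      fun S => Bc_symm _ _
    simp only [e]
    have h3 : ∑ x : Ab, ind (X = x) = 1 := by simp [ind]
    rw [h3] at h
    rw [eq_neg_of_add_eq_zero_left h]; decide
  have eJCC : J * (C * C.transpose) = 0 := by
    rw [← Matrix.mul_assoc, eJC]
    have := congrArg Matrix.transpose eCJ
    rw [Matrix.transpose_mul] at this
    exact this
  have eCCJ : (C * C.transpose) * J = 0 := by
    have := congrArg Matrix.transpose eJCC
    simp only [Matrix.transpose_mul, Matrix.transpose_transpose, Matrix.transpose_zero] at this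
    exact this
  have eCC : (C * C.transpose) * (C * C.transpose) = 0 := by
    rw [Matrix.mul_assoc, ← Matrix.mul_assoc C.transpose, eC, ← Matrix.mul_assoc, eCJ0,
      Matrix.zero_mul]
  have n0 : J10 * J01 = 0 := by
    rw [← eJC, Matrix.mul_assoc, eCJ, Matrix.mul_zero]
  have eJJ : J * J = J := by
    ext P R
    have h := congrFun (congrFun n0 P) R
    have h1 := split (fun _ => 1)
    simp only [Matrix.mul_apply, J10, J01, J, Matrix.of_apply, mul_one, Matrix.zero_apply] at h ⊢
    rw [h, add_zero] at h1
    rw [h1]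
    simp only [Finset.sum_const, Finset.card_univ, card_pts, nsmul_eq_mul, mul_one]
    have : Odd (Fintype.card F ^ 2 + Fintype.card F + 1) := by
      apply Even.add_one
      exact (hodd.pow).add_odd hodd
    exact (ZMod.natCast_eq_one_iff_odd).2 this
  have mtwo : ∀ M : Matrix An An (ZMod 2), M + M = 0 := fun M => by ext; exact two _
  have mneg : ∀ M : Matrix An An (ZMod 2), -M = M := fun M => neg_eq_of_add_eq_zero_left (mtwo M)
  have eA2 : A11 F * A11 F = J + 1 + C * C.transpose := by
    rw [← eA, add_assoc, mtwo, add_zero]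
  rw [show (4 : ℕ) = 2 + 2 from rfl, pow_add, pow_two, eA2, sub_eq_add_neg, mneg]
  change _ = J + 1
  simp only [add_mul, mul_add, eJJ, eJCC, eCCJ, eCC, one_mul, mul_one]
  calc _ = (J + 1) + (J + J) + (C * C.transpose + C * C.transpose) := by abel
    _ = _ := by rw [mtwo, mtwo]; simp
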